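/- Let E be an ordered Polish space and P a monotone Markov kernel on E such that the set M = {(x,y) : x ⪯ y} is achievable, and assume there exists a stationary distribution π for P. If for some x ∈ E the family of laws of Xₙˣ, n ≥ 0, is tight, then these laws converge weakly to π (even if E is not normal). -/

import Mathlib

open MeasureTheory ProbabilityTheory Filter Topology

/-- `μ` is *stochastically smaller* than `ν` (written `μ ⪯ ν` in the paper):
`μ I ≤ ν I` for every Borel increasing (upper) set `I`. -/
def StochDom {E : Type*} [MeasurableSpace E] [Preorder E] (μ ν : Measure E) : Prop :=
  ∀ I : Set E, MeasurableSet I → IsUpperSet I → μ I ≤ ν I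

/-- A Markov kernel `P` is *(stochastically) monotone* if for every bounded monotone
measurable `g : E → [0,1]` the map `x ↦ ∫ g dP(x)` is again monotone. -/
def MonotoneKernel {E : Type*} [MeasurableSpace E] [Preorder E] (P : Kernel E E) : Prop :=
  ∀ g : E → ℝ, Measurable g → Monotone g → (∀ x, g x ∈ Set.Icc (0 : ℝ) 1) →
    Monotone fun x => ∫ y, g y ∂(P x)

/-- The `n`-step transition kernel `P⁽ⁿ⁾` of a Markov kernel `P`;
`kpow P n x` is the law of `Xₙˣ`, the chain with kernel `P` started at `x`. -/
noncomputable def kpow {E : Type*} [MeasurableSpace E] (P : Kernel E E) : ℕ → Kernel E E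
  | 0 => Kernel.id
  | n + 1 => P.comp (kpow P n)

/-- The process `Z` on `(Ω, μ)` is a (possibly time-inhomogeneous) Markov chain with
one-step kernels `Q n`, expressed through finite-dimensional distributions: for every
bounded measurable cylinder functional `φ` of the past and every Borel set `A`,
`E[φ(Z₀,…,Zₙ) · 1_A(Z_{n+1})] = E[φ(Z₀,…,Zₙ) · (Q n)(Zₙ, A)]`. -/
def MCStep {Ω S : Type*} [MeasurableSpace Ω] [MeasurableSpace S]
    (μ : Measure Ω) (Q : ℕ → Kernel S S) (Z : ℕ → Ω → S) : Prop :=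
  ∀ (n : ℕ) (A : Set S), MeasurableSet A →
    ∀ φ : (Fin (n + 1) → S) → ℝ, Measurable φ → (∀ v, φ v ∈ Set.Icc (0 : ℝ) 1) →
      ∫ ω, φ (fun i => Z i.1 ω) * A.indicator (fun _ => (1 : ℝ)) (Z (n + 1) ω) ∂μ
        = ∫ ω, φ (fun i => Z i.1 ω) * ((Q n) (Z n ω) A).toReal ∂μ

/-- `X` on `(Ω, μ)` is a time-homogeneous Markov chain with kernel `P` started at `x`. -/
def IsMChain {E Ω : Type*} [MeasurableSpace E] [MeasurableSpace Ω]
    (P : Kernel E E) (x : E) (μ : Measure Ω) (X : ℕ → Ω → E) : Prop :=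
  IsProbabilityMeasure μ ∧ (∀ n, Measurable (X n)) ∧ (∀ᵐ ω ∂μ, X 0 ω = x) ∧
    MCStep μ (fun _ => P) X

/-- A *Markovian coupling* of two chains with kernel `P` started at `x` and `y`:
both coordinates are Markov chains with kernel `P` and the pair process is itself a
(possibly time-inhomogeneous) Markov chain. -/
def IsMarkovianCoupling {E Ω : Type*} [MeasurableSpace E] [MeasurableSpace Ω]
    (P : Kernel E E) (x y : E) (μ : Measure Ω) (X Y : ℕ → Ω → E) : Prop :=
  IsMChain P x μ X ∧ IsMChain P y μ Y ∧
    ∃ Q : ℕ → Kernel (E × E) (E × E), (∀ n, IsMarkovKernel (Q n)) ∧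
      MCStep μ Q fun n ω => (X n ω, Y n ω)

/-- A set `H ⊆ E × E` is *achievable* for the kernel `P` if for all `x, y` there is a
Markovian coupling of the chains started at `x` and `y` whose hitting time of `H`
is finite almost surely. -/
def Achievable {E : Type*} [MeasurableSpace E] (P : Kernel E E) (H : Set (E × E)) : Prop :=
  ∀ x y : E, ∃ (Ω : Type) (_ : MeasurableSpace Ω) (μ : Measure Ω) (X Y : ℕ → Ω → E),
    IsMarkovianCoupling P x y μ X Y ∧ ∀ᵐ ω ∂μ, ∃ n, (X n ω, Y n ω) ∈ H

/-- Condition (BMC): every increasing sequence bounded above by some element converges. -/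
def BMC (E : Type*) [Preorder E] [TopologicalSpace E] : Prop :=
  ∀ (x : ℕ → E) (y : E), Monotone x → (∀ n, x n ≤ y) → ∃ l, Tendsto x atTop (nhds l)

/-- The ordered metric space `E` is *normal*: there is a continuous `h : [0,∞) → [0,∞)`
with `h 0 = 0` such that `x ⪯ y ⪯ z` implies `d(x,y) ≤ h (d(x,z))`. -/
def NormalOrdered (E : Type*) [PseudoMetricSpace E] [Preorder E] : Prop :=
  ∃ h : ℝ → ℝ, ContinuousOn h (Set.Ici 0) ∧ h 0 = 0 ∧ (∀ t ≥ (0 : ℝ), 0 ≤ h t) ∧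
    ∀ x y z : E, x ≤ y → y ≤ z → dist x y ≤ h (dist x z)

/-- Condition (PR): there are `x₀ ⪯ y₀` such that the hitting times
`ν⁻ = min {n ≥ 1 : Xₙ^{x₀} ⪰ x₀}` and `ν⁺ = min {n ≥ 1 : Xₙ^{y₀} ⪯ y₀}`
have finite expectations. -/
def PRCond {E : Type*} [MeasurableSpace E] [Preorder E] (P : Kernel E E) : Prop :=
  ∃ x₀ y₀ : E, x₀ ≤ y₀ ∧
    (∃ (Ω : Type) (_ : MeasurableSpace Ω) (μ : Measure Ω) (X : ℕ → Ω → E),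
      IsMChain P x₀ μ X ∧ (∀ᵐ ω ∂μ, ∃ n, 1 ≤ n ∧ x₀ ≤ X n ω) ∧
      Integrable (fun ω => ((sInf {n : ℕ | 1 ≤ n ∧ x₀ ≤ X n ω} : ℕ) : ℝ)) μ) ∧
    (∃ (Ω : Type) (_ : MeasurableSpace Ω) (μ : Measure Ω) (X : ℕ → Ω → E),
      IsMChain P y₀ μ X ∧ (∀ᵐ ω ∂μ, ∃ n, 1 ≤ n ∧ X n ω ≤ y₀) ∧
      Integrable (fun ω => ((sInf {n : ℕ | 1 ≤ n ∧ X n ω ≤ y₀} : ℕ) : ℝ)) μ)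

/-!
Two chains coupled as in `Achievable` need not be Markov with respect to their joint filtration,
so they cannot be kept ordered after the coupling time. One works with the functions `Pⁿ(·, A)`
instead, for `A` closed and increasing or decreasing. Along the stationary chain,
`Pⁿ(X_k, A) - Pⁿ⁺ᵏ(X_0, A)` is a fluctuation around a conditional mean whose variances telescope
in `n`, so it tends to `0` almost surely. A coupling of two chains started at typical points then
shows that their values of `Pⁿ(·, A)` merge, necessarily towards `π A`. The function
`z ↦ liminf Pⁿ(z, A)` is superharmonic, and a chain from any `x` reaches a point where it is at
least `π A`, by coupling with a typical chain; so it is at least `π A` at `x` itself. Finally,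
under tightness, bounding the liminf on closed increasing and on closed decreasing sets is enough
for weak convergence, because finite measures on `E` are determined by the closed upper sets.
-/

section OrderTopology

variable {E : Type*} [TopologicalSpace E]

theorem isClosed_upperClosure_of_isCompact [Preorder E] [OrderClosedTopology E] {K : Set E}
    (hK : IsCompact K) : IsClosed (upperClosure K : Set E) := by
  have : CompactSpace K := isCompact_iff_compactSpace.mp hK
  have hproj : (upperClosure K : Set E) = Prod.snd '' {p : K × E | (p.1 : E) ≤ p.2} := by
    ext y
    simp
  rw [hproj]
  exact isClosedMap_snd_of_compactSpace _ (isClosed_le (by fun_prop) (by fun_prop))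

theorem isClosed_lowerClosure_of_isCompact [Preorder E] [OrderClosedTopology E] {K : Set E}
    (hK : IsCompact K) : IsClosed (lowerClosure K : Set E) :=
  isClosed_upperClosure_of_isCompact (E := Eᵒᵈ) hK

theorem exists_countableBasis_mem_upperClosure_of_not_le [SecondCountableTopology E]
    [RegularSpace E] [Preorder E] [OrderClosedTopology E] {x y : E} (hxy : ¬ x ≤ y) {K : Set E}
    (hx : x ∈ K) : ∃ b ∈ TopologicalSpace.countableBasis E,
      x ∈ upperClosure (closure b ∩ K) ∧ y ∉ upperClosure (closure b ∩ K) := by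
  have hopen : IsOpen {p : E × E | p.1 ≤ p.2}ᶜ :=
    (isClosed_le continuous_fst continuous_snd).isOpen_compl
  obtain ⟨U, V, hU, -, hxU, hyV, hUV⟩ := isOpen_prod_iff.mp hopen x y hxy
  obtain ⟨b, hb, hxb, hbU⟩ :=
    (TopologicalSpace.isBasis_countableBasis E).exists_closure_subset (hU.mem_nhds hxU)
  refine ⟨b, hb, subset_upperClosure ⟨subset_closure hxb, hx⟩, ?_⟩
  rintro ⟨a, ⟨hab, -⟩, hay⟩
  exact hUV (Set.mk_mem_prod (hbU hab) hyV) hay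

theorem hasCountableSeparatingOn_isClosed_isUpperSet [SecondCountableTopology E]
    [RegularSpace E] [PartialOrder E] [OrderClosedTopology E] {S : Set E}
    (hS : IsSigmaCompact S) :
    HasCountableSeparatingOn E (fun F => IsClosed F ∧ IsUpperSet F) S := by
  obtain ⟨K, hK, rfl⟩ := hS
  refine ⟨⟨(fun p : ℕ × Set E => (upperClosure (closure p.2 ∩ K p.1) : Set E)) ''
    (Set.univ ×ˢ TopologicalSpace.countableBasis E), ?_, ?_, ?_⟩⟩
  · exact (Set.countable_univ.prod (TopologicalSpace.countable_countableBasis E)).image _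
  · rintro _ ⟨p, -, rfl⟩
    exact ⟨isClosed_upperClosure_of_isCompact ((hK p.1).inter_left isClosed_closure),
      UpperSet.upper _⟩
  · have le_of_forall_mem : ∀ x ∈ ⋃ n, K n, ∀ y, (∀ n, ∀ b ∈ TopologicalSpace.countableBasis E,
        x ∈ upperClosure (closure b ∩ K n) → y ∈ upperClosure (closure b ∩ K n)) → x ≤ y := by
      intro x hx y h
      by_contra hxy
      obtain ⟨n, hn⟩ := Set.mem_iUnion.mp hx
      obtain ⟨b, hb, hxb, hyb⟩ := exists_countableBasis_mem_upperClosure_of_not_le hxy hn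
      exact hyb (h n b hb hxb)
    intro x hx y hy h
    have hiff n b (hb : b ∈ TopologicalSpace.countableBasis E) :=
      h _ ⟨(n, b), ⟨Set.mem_univ _, hb⟩, rfl⟩
    exact le_antisymm (le_of_forall_mem x hx y fun n b hb => (hiff n b hb).1)
      (le_of_forall_mem y hy x fun n b hb => (hiff n b hb).2)

end OrderTopology

section MeasureDetermination

-- By the Lusin–Souslin theorem, the identity map from `mα` to `m` sends measurable sets to
-- measurable sets.
theorem measurableSet_of_le_of_countablySeparated {α : Type*} {m mα : MeasurableSpace α}
    [StandardBorelSpace α] (hm : m ≤ mα) (hsep : @MeasurableSpace.CountablySeparated α m)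
    {t : Set α} (ht : MeasurableSet t) : MeasurableSet[m] t := by
  have himage : MeasurableSet[m] (id '' t) :=
    @MeasurableSet.image_of_measurable_injOn α α m t id hsep mα _ ht (measurable_id'' hm)
      Function.injective_id.injOn
  rwa [Set.image_id] at himage

theorem exists_measurableSet_inter_eq {α : Type*} {m mα : MeasurableSpace α}
    [StandardBorelSpace α] (hm : m ≤ mα) {s : Set α} (hs : MeasurableSet s)
    [hsep : HasCountableSeparatingOn α (MeasurableSet[m]) s] {t : Set α} (ht : MeasurableSet t) :
    ∃ u, MeasurableSet[m] u ∧ u ∩ s = t ∩ s := by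
  have : StandardBorelSpace s := hs.standardBorel
  obtain ⟨u, hu, hut⟩ : MeasurableSet[m.comap Subtype.val] (Subtype.val ⁻¹' t : Set s) :=
    measurableSet_of_le_of_countablySeparated (MeasurableSpace.comap_mono hm)
      ((@MeasurableSpace.CountablySeparated.subtype_iff α m s).mpr hsep)
      (measurable_subtype_coe ht)
  refine ⟨u, hu, ?_⟩
  rwa [Set.inter_comm u, Set.inter_comm t, ← Subtype.preimage_val_eq_preimage_val_iff]

theorem measure_ext_of_hasCountableSeparatingOn {α : Type*} {m mα : MeasurableSpace α}
    [StandardBorelSpace α] (hm : m ≤ mα) {s : Set α}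
    (hs : MeasurableSet s) [HasCountableSeparatingOn α (MeasurableSet[m]) s] {μ ν : Measure α}
    (hμ : μ sᶜ = 0) (hν : ν sᶜ = 0) (h : ∀ t, MeasurableSet[m] t → μ t = ν t) : μ = ν := by
  ext t ht
  obtain ⟨u, hu, hut⟩ := exists_measurableSet_inter_eq hm hs ht
  rw [← measure_inter_conull hμ, ← measure_inter_conull hν, ← hut, measure_inter_conull hμ,
    measure_inter_conull hν, h u hu]

variable {E : Type*} [TopologicalSpace E] [PolishSpace E] [MeasurableSpace E] [BorelSpace E]

theorem exists_isSigmaCompact_measure_compl_eq_zero (μ : Measure E) [IsFiniteMeasure μ] :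
    ∃ S : Set E, IsSigmaCompact S ∧ MeasurableSet S ∧ μ Sᶜ = 0 := by
  have htight := isTightMeasureSet_iff_exists_isCompact_measure_compl_le.mp
    (isTightMeasureSet_singleton (μ := μ))
  have hK : ∀ n : ℕ, ∃ K : Set E, IsCompact K ∧ μ Kᶜ ≤ (n : ENNReal)⁻¹ := fun n => by
    obtain ⟨K, hK, hμK⟩ := htight (n : ENNReal)⁻¹ (by simp)
    exact ⟨K, hK, hμK μ rfl⟩
  choose K hK hμK using hK
  refine ⟨⋃ n, K n, isSigmaCompact_iUnion_of_isCompact K hK,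
    .iUnion fun n => (hK n).measurableSet, ?_⟩
  refine le_antisymm (ge_of_tendsto' ENNReal.tendsto_inv_nat_nhds_zero fun n => ?_) zero_le
  exact (measure_mono (Set.compl_subset_compl.mpr (Set.subset_iUnion K n))).trans (hμK n)

variable [PartialOrder E] [OrderClosedTopology E]

/-- The σ-algebra generated by the closed upper sets. -/
abbrev closedUpperMeasurableSpace (E : Type*) [TopologicalSpace E] [Preorder E] :
    MeasurableSpace E :=
  MeasurableSpace.generateFrom {F | IsClosed F ∧ IsUpperSet F}

theorem closedUpperMeasurableSpace_le (E : Type*) [TopologicalSpace E] [Preorder E]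
    [mE : MeasurableSpace E] [OpensMeasurableSpace E] : closedUpperMeasurableSpace E ≤ mE :=
  MeasurableSpace.generateFrom_le fun _ hF => hF.1.measurableSet

theorem trim_closedUpperMeasurableSpace_eq {E : Type*} [TopologicalSpace E] [Preorder E]
    [MeasurableSpace E] [OpensMeasurableSpace E] {μ ν : Measure E} [IsFiniteMeasure μ]
    (h : ∀ F, IsClosed F → IsUpperSet F → μ F = ν F) :
    μ.trim (closedUpperMeasurableSpace_le E) = ν.trim (closedUpperMeasurableSpace_le E) := by
  have htrim {F : Set E} (hF : IsClosed F) (hF' : IsUpperSet F) :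
      μ.trim (closedUpperMeasurableSpace_le E) F = ν.trim (closedUpperMeasurableSpace_le E) F := by
    have hmeas : MeasurableSet[closedUpperMeasurableSpace E] F :=
      MeasurableSpace.measurableSet_generateFrom ⟨hF, hF'⟩
    rw [trim_measurableSet_eq _ hmeas, trim_measurableSet_eq _ hmeas, h F hF hF']
  refine ext_of_generate_finite _ rfl ?_ (fun F hF => htrim hF.1 hF.2)
    (htrim isClosed_univ isUpperSet_univ)
  rintro F ⟨hF, hF'⟩ G ⟨hG, hG'⟩ -
  exact ⟨hF.inter hG, hF'.inter hG'⟩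

theorem measure_ext_of_isClosed_isUpperSet {μ ν : Measure E} [IsFiniteMeasure μ]
    [IsFiniteMeasure ν] (h : ∀ F, IsClosed F → IsUpperSet F → μ F = ν F) : μ = ν := by
  obtain ⟨S, hSσ, hS, hSnull⟩ := exists_isSigmaCompact_measure_compl_eq_zero (μ + ν)
  rw [Measure.add_apply, add_eq_zero] at hSnull
  have : HasCountableSeparatingOn E (MeasurableSet[closedUpperMeasurableSpace E]) S :=
    (hasCountableSeparatingOn_isClosed_isUpperSet hSσ).mono
      (fun F hF => MeasurableSpace.measurableSet_generateFrom hF) subset_rfl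
  refine measure_ext_of_hasCountableSeparatingOn (closedUpperMeasurableSpace_le E) hS hSnull.1
    hSnull.2 fun t ht => ?_
  rw [← trim_measurableSet_eq (closedUpperMeasurableSpace_le E) ht,
    trim_closedUpperMeasurableSpace_eq h, trim_measurableSet_eq _ ht]

theorem measure_compl_le_of_forall_isClosed_isLowerSet_le {μ ν : Measure E} [IsFiniteMeasure μ]
    (h : ∀ F, IsClosed F → IsLowerSet F → μ F ≤ ν F) {F : Set E} (hF : IsClosed F)
    (hF' : IsUpperSet F) : μ Fᶜ ≤ ν Fᶜ := by
  rw [hF.isOpen_compl.measurableSet.measure_eq_iSup_isCompact]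
  refine iSup₂_le fun K hKF => iSup_le fun hK => ?_
  calc μ K ≤ μ (lowerClosure K) := measure_mono subset_lowerClosure
    _ ≤ ν (lowerClosure K) := h _ (isClosed_lowerClosure_of_isCompact hK) (LowerSet.lower _)
    _ ≤ ν Fᶜ := measure_mono (lowerClosure_min hKF hF'.compl)

theorem measure_eq_of_forall_isClosed_le {μ ν : Measure E} [IsProbabilityMeasure μ]
    [IsProbabilityMeasure ν] (hupper : ∀ F, IsClosed F → IsUpperSet F → μ F ≤ ν F)
    (hlower : ∀ F, IsClosed F → IsLowerSet F → μ F ≤ ν F) : μ = ν := by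
  refine measure_ext_of_isClosed_isUpperSet fun F hF hF' =>
    le_antisymm (hupper F hF hF') ?_
  have hcompl := measure_compl_le_of_forall_isClosed_isLowerSet_le hlower hF hF'
  rwa [prob_compl_eq_one_sub hF.measurableSet, prob_compl_eq_one_sub hF.measurableSet,
    ENNReal.sub_le_sub_iff_left prob_le_one ENNReal.one_ne_top] at hcompl

theorem tendsto_of_isTightMeasureSet_of_le_liminf {ι : Type*} {l : Filter ι}
    {μ : ι → ProbabilityMeasure E} {π : ProbabilityMeasure E}
    (htight : IsTightMeasureSet (Set.range fun i => (μ i : Measure E)))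
    (hupper : ∀ F, IsClosed F → IsUpperSet F →
      (π : Measure E) F ≤ liminf (fun i => (μ i : Measure E) F) l)
    (hlower : ∀ F, IsClosed F → IsLowerSet F →
      (π : Measure E) F ≤ liminf (fun i => (μ i : Measure E) F) l) :
    Tendsto μ l (𝓝 π) := by
  have hcompact : IsCompact (closure (Set.range μ)) := by
    refine isCompact_closure_of_isTightMeasureSet (htight.subset ?_)
    rintro _ ⟨_, ⟨i, rfl⟩, rfl⟩
    exact ⟨i, rfl⟩
  refine hcompact.tendsto_nhds_of_unique_mapClusterPt
    (.of_forall fun i => subset_closure ⟨i, rfl⟩) fun ν _ hν => ?_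
  obtain ⟨U, hUl, hUν⟩ := mapClusterPt_iff_ultrafilter.mp hν
  have hle {F : Set E} (hF : IsClosed F)
      (hl : (π : Measure E) F ≤ liminf (fun i => (μ i : Measure E) F) l) :
      (π : Measure E) F ≤ (ν : Measure E) F :=
    calc (π : Measure E) F ≤ liminf (fun i => (μ i : Measure E) F) l := hl
      _ ≤ liminf (fun i => (μ i : Measure E) F) U := liminf_le_liminf_of_le hUl
      _ ≤ limsup (fun i => (μ i : Measure E) F) U := liminf_le_limsup
      _ ≤ (ν : Measure E) F :=
        ProbabilityMeasure.limsup_measure_closed_le_of_tendsto hUν hF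
  exact Subtype.ext (measure_eq_of_forall_isClosed_le (fun F hF hF' => hle hF (hupper F hF hF'))
    fun F hF hF' => hle hF (hlower F hF hF')).symm

end MeasureDetermination

section KernelPowers

variable {E : Type*} [MeasurableSpace E] {P : Kernel E E}

instance instIsMarkovKernelKpow [IsMarkovKernel P] (n : ℕ) : IsMarkovKernel (kpow P n) := by
  induction n with
  | zero => exact inferInstanceAs (IsMarkovKernel Kernel.id)
  | succ n ih => exact inferInstanceAs (IsMarkovKernel (P ∘ₖ kpow P n))

theorem kpow_one (P : Kernel E E) : kpow P 1 = P :=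
  Kernel.comp_id P

theorem kpow_add (P : Kernel E E) (m n : ℕ) : kpow P (m + n) = kpow P m ∘ₖ kpow P n := by
  induction m with
  | zero => rw [Nat.zero_add, kpow, Kernel.id_comp]
  | succ m ih => rw [Nat.succ_add, kpow, ih, kpow, Kernel.comp_assoc]

theorem kpow_add_apply (P : Kernel E E) (m n : ℕ) (x : E) :
    kpow P (m + n) x = (kpow P n x).bind (kpow P m) := by
  rw [kpow_add, Kernel.comp_apply]

theorem invariant_kpow {π : Measure E} (hπ : Kernel.Invariant P π) (n : ℕ) :
    Kernel.Invariant (kpow P n) π := by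
  induction n with
  | zero => exact Measure.id_comp
  | succ n ih => exact hπ.comp ih

theorem MonotoneKernel.comp [Preorder E] {Q : Kernel E E} [IsFiniteKernel P] [IsMarkovKernel Q]
    (hQ : MonotoneKernel Q) (hP : MonotoneKernel P) : MonotoneKernel (Q ∘ₖ P) := by
  intro g hg hmono hg01
  have hint (x : E) : Integrable g ((Q ∘ₖ P) x) :=
    .of_mem_Icc 0 1 hg.aemeasurable (.of_forall hg01)
  have hmem (x : E) : ∫ y, g y ∂(Q x) ∈ Set.Icc (0 : ℝ) 1 :=
    (convex_Icc 0 1).integral_mem isClosed_Icc (.of_forall hg01)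
      (.of_mem_Icc 0 1 hg.aemeasurable (.of_forall hg01))
  simp_rw [Kernel.integral_comp (hint _)]
  exact hP _ hg.stronglyMeasurable.integral_kernel.measurable (hQ g hg hmono hg01) hmem

theorem MonotoneKernel.kpow [Preorder E] [IsMarkovKernel P] (hP : MonotoneKernel P) (n : ℕ) :
    MonotoneKernel (kpow P n) := by
  induction n with
  | zero =>
    intro g hg hmono _
    simpa only [_root_.kpow, Kernel.id_apply, integral_dirac' _ _ hg.stronglyMeasurable]
  | succ n ih => exact hP.comp ih

theorem MonotoneKernel.monotone_measure [Preorder E] [IsFiniteKernel P] (hP : MonotoneKernel P)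
    {I : Set E} (hI : MeasurableSet I) (hI' : IsUpperSet I) : Monotone fun x => P x I := by
  have hind : Monotone (I.indicator (1 : E → ℝ)) := fun x y hxy =>
    Set.indicator_apply_le' (fun hx => by simp [hI' hxy hx])
      fun _ => Set.indicator_nonneg (fun _ _ => zero_le_one) y
  have h := hP _ (measurable_one.indicator hI) hind fun x =>
    ⟨Set.indicator_nonneg (fun _ _ => zero_le_one) x,
      Set.indicator_le_self' (fun _ _ => zero_le_one) x⟩
  simp_rw [integral_indicator_one hI] at h
  exact fun x y hxy => (ENNReal.toReal_le_toReal (by finiteness) (by finiteness)).mp (h hxy)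

theorem MonotoneKernel.antitone_measure [Preorder E] [IsMarkovKernel P] (hP : MonotoneKernel P)
    {I : Set E} (hI : MeasurableSet I) (hI' : IsLowerSet I) : Antitone fun x => P x I := by
  intro x y hxy
  have hcompl : P x Iᶜ ≤ P y Iᶜ := hP.monotone_measure hI.compl hI'.compl hxy
  rwa [prob_compl_eq_one_sub hI, prob_compl_eq_one_sub hI,
    ENNReal.sub_le_sub_iff_left prob_le_one ENNReal.one_ne_top] at hcompl

end KernelPowers

section MarkovChains

open scoped ENNReal

/-- The path of the process `Z` up to time `n`, the argument of the cylinder functionals in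
`MCStep`. -/
def past {Ω S : Type*} (Z : ℕ → Ω → S) (n : ℕ) (ω : Ω) : Fin (n + 1) → S :=
  fun i => Z i ω

variable {Ω S : Type*} [MeasurableSpace Ω] [MeasurableSpace S] {μ : Measure Ω}

theorem measurable_past {Z : ℕ → Ω → S} (hZ : ∀ n, Measurable (Z n)) (n : ℕ) :
    Measurable (past Z n) :=
  measurable_pi_lambda _ fun i => hZ i

theorem MCStep.map_restrict [IsFiniteMeasure μ] {Q : ℕ → Kernel S S} [∀ n, IsFiniteKernel (Q n)]
    {Z : ℕ → Ω → S} (h : MCStep μ Q Z) (hZ : ∀ n, Measurable (Z n)) (n : ℕ)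
    {C : Set (Fin (n + 1) → S)} (hC : MeasurableSet C) :
    (μ.restrict (past Z n ⁻¹' C)).map (Z (n + 1)) =
      ((μ.restrict (past Z n ⁻¹' C)).map (Z n)).bind (Q n) := by
  ext A hA
  have hB : MeasurableSet (past Z n ⁻¹' C) := measurable_past hZ n hC
  have hQ : Measurable fun ω => Q n (Z n ω) A := ((Q n).measurable_coe hA).comp (hZ n)
  have hcyl (t : Ω → ℝ) : ∫ ω, C.indicator (fun _ => (1 : ℝ)) (past Z n ω) * t ω ∂μ =
      ∫ ω in past Z n ⁻¹' C, t ω ∂μ := by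
    rw [← integral_indicator hB]
    congr with ω
    by_cases hω : past Z n ω ∈ C <;> simp [hω]
  have hstep : ∫ ω in past Z n ⁻¹' C, A.indicator (fun _ => (1 : ℝ)) (Z (n + 1) ω) ∂μ =
      ∫ ω in past Z n ⁻¹' C, (Q n (Z n ω) A).toReal ∂μ := by
    rw [← hcyl, ← hcyl]
    exact h n A hA _ (measurable_const.indicator hC) fun v =>
      ⟨Set.indicator_nonneg (fun _ _ => zero_le_one) v,
        Set.indicator_le_self' (fun _ _ => zero_le_one) v⟩
  rw [← integral_map (hZ _).aemeasurable (by fun_prop (disch := assumption)),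
    integral_indicator_const _ hA, smul_eq_mul, mul_one,
    integral_toReal hQ.aemeasurable (.of_forall fun _ => measure_lt_top _ _),
    ← lintegral_map ((Q n).measurable_coe hA) (hZ n),
    ← Measure.bind_apply hA (Q n).aemeasurable] at hstep
  exact (ENNReal.toReal_eq_toReal_iff' (by finiteness) (by finiteness)).mp hstep

theorem MCStep.setLIntegral_succ [IsFiniteMeasure μ] {Q : ℕ → Kernel S S}
    [∀ n, IsFiniteKernel (Q n)] {Z : ℕ → Ω → S} (h : MCStep μ Q Z) (hZ : ∀ n, Measurable (Z n))
    (n : ℕ) {C : Set (Fin (n + 1) → S)} (hC : MeasurableSet C) {u : S → ℝ≥0∞}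
    (hu : Measurable u) :
    ∫⁻ ω in past Z n ⁻¹' C, u (Z (n + 1) ω) ∂μ =
      ∫⁻ ω in past Z n ⁻¹' C, ∫⁻ z, u z ∂(Q n (Z n ω)) ∂μ := by
  rw [← lintegral_map hu (hZ _), h.map_restrict hZ n hC,
    Measure.lintegral_bind (Q n).aemeasurable hu.aemeasurable,
    lintegral_map hu.lintegral_kernel (hZ n)]

theorem setLIntegral_inter_add_mul_measure_sdiff_le {u : Ω → ℝ≥0∞} (hu : Measurable u)
    {c : ℝ≥0∞} (B : Set Ω) {D : Set Ω} (hD : MeasurableSet D) (hc : ∀ ω ∉ D, c ≤ u ω) :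
    ∫⁻ ω in B ∩ D, u ω ∂μ + c * μ (B \ D) ≤ ∫⁻ ω in B, u ω ∂μ := by
  rw [← lintegral_inter_add_sdiff u B hD, ← setLIntegral_const]
  gcongr 1
  exact setLIntegral_mono hu fun ω hω => hc ω hω.2

variable {P : Kernel S S} [IsFiniteKernel P] {x : S} {X : ℕ → Ω → S}

theorem IsMChain.map_eq (h : IsMChain P x μ X) (n : ℕ) : μ.map (X n) = kpow P n x := by
  obtain ⟨_, hX, h0, hstep⟩ := h
  induction n with
  | zero =>
    rw [Measure.map_congr h0, Measure.map_const, measure_univ, one_smul, kpow, Kernel.id_apply]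
  | succ n ih =>
    have hmap := hstep.map_restrict hX n .univ
    rwa [Set.preimage_univ, Measure.restrict_univ, ih, ← Kernel.comp_apply] at hmap

theorem IsMChain.ae_forall (h : IsMChain P x μ X) {p : ℕ → S → Prop}
    (hp : ∀ k, ∀ᵐ z ∂(kpow P k x), p k z) : ∀ᵐ ω ∂μ, ∀ k, p k (X k ω) := by
  rw [ae_all_iff]
  intro k
  exact ae_of_ae_map (h.2.1 k).aemeasurable (h.map_eq k ▸ hp k)

theorem past_succ_preimage_pi {Ω S : Type*} (X : ℕ → Ω → S) (n : ℕ) (D : Set S) :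
    past X (n + 1) ⁻¹' Set.univ.pi (fun _ => D) =
      past X n ⁻¹' Set.univ.pi (fun _ => D) ∩ X (n + 1) ⁻¹' D := by
  ext ω
  simp only [Set.mem_preimage, Set.mem_univ_pi, Set.mem_inter_iff]
  exact Fin.forall_fin_succ'

theorem IsMChain.setLIntegral_add_mul_measure_compl_le (h : IsMChain P x μ X) {w : S → ℝ≥0∞}
    (hw : Measurable w) (hsuper : ∀ z, ∫⁻ y, w y ∂(P z) ≤ w z) {c : ℝ≥0∞} {D : Set S}
    (hD : MeasurableSet D) (hc : ∀ z ∉ D, c ≤ w z) (n : ℕ) :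
    ∫⁻ ω in past X n ⁻¹' Set.univ.pi (fun _ => D), w (X n ω) ∂μ +
      c * μ (past X n ⁻¹' Set.univ.pi (fun _ => D))ᶜ ≤ w x := by
  obtain ⟨_, hX, h0, hstep⟩ := h
  have hdrop (k : ℕ) (B : Set Ω) :
      ∫⁻ ω in B ∩ X k ⁻¹' D, w (X k ω) ∂μ + c * μ (B \ X k ⁻¹' D) ≤ ∫⁻ ω in B, w (X k ω) ∂μ :=
    setLIntegral_inter_add_mul_measure_sdiff_le (hw.comp (hX k)) B (hX k hD) fun ω hω => hc _ hω
  induction n with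
  | zero =>
    have hpast : past X 0 ⁻¹' Set.univ.pi (fun _ => D) = X 0 ⁻¹' D := by
      ext ω
      simp [past]
    have hinit : ∫⁻ ω, w (X 0 ω) ∂μ = w x := by
      rw [lintegral_congr_ae (h0.mono fun ω hω => congrArg w hω), lintegral_const, measure_univ,
        mul_one]
    simpa only [hpast, hinit, Set.univ_inter, ← Set.compl_eq_univ_sdiff, Measure.restrict_univ]
      using hdrop 0 Set.univ
  | succ n ih =>
    rw [past_succ_preimage_pi]
    set B := past X n ⁻¹' Set.univ.pi (fun _ => D)
    set A := X (n + 1) ⁻¹' D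
    have hcompl : μ (B ∩ A)ᶜ ≤ μ (B \ A) + μ Bᶜ := by
      refine (measure_mono fun ω hω => ?_).trans (measure_union_le _ _)
      by_cases hB : ω ∈ B
      · exact .inl ⟨hB, fun hA => hω ⟨hB, hA⟩⟩
      · exact .inr hB
    calc ∫⁻ ω in B ∩ A, w (X (n + 1) ω) ∂μ + c * μ (B ∩ A)ᶜ
        ≤ ∫⁻ ω in B ∩ A, w (X (n + 1) ω) ∂μ + c * (μ (B \ A) + μ Bᶜ) := by gcongr
      _ = (∫⁻ ω in B ∩ A, w (X (n + 1) ω) ∂μ + c * μ (B \ A)) + c * μ Bᶜ := by ring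
      _ ≤ ∫⁻ ω in B, w (X (n + 1) ω) ∂μ + c * μ Bᶜ := by
        gcongr
        exact hdrop (n + 1) B
      _ = ∫⁻ ω in B, ∫⁻ y, w y ∂(P (X n ω)) ∂μ + c * μ Bᶜ := by
        rw [hstep.setLIntegral_succ hX n (.univ_pi fun _ => hD) hw]
      _ ≤ ∫⁻ ω in B, w (X n ω) ∂μ + c * μ Bᶜ := by
        gcongr
        exact hsuper _
      _ ≤ w x := ih

-- Optional stopping at the first time `w (X k) ≥ c`.
theorem IsMChain.le_of_ae_exists_le (h : IsMChain P x μ X) {w : S → ℝ≥0∞} (hw : Measurable w)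
    (hsuper : ∀ z, ∫⁻ y, w y ∂(P z) ≤ w z) {c : ℝ≥0∞} (hhit : ∀ᵐ ω ∂μ, ∃ k, c ≤ w (X k ω)) :
    c ≤ w x := by
  have : IsProbabilityMeasure μ := h.1
  have hD : MeasurableSet {z | w z < c} := measurableSet_lt hw measurable_const
  set B : ℕ → Set Ω := fun n => past X n ⁻¹' Set.univ.pi (fun _ => {z | w z < c}) with hB
  have hmono : Monotone fun n => (B n)ᶜ := monotone_nat_of_le_succ fun n => by
    simp only [hB, past_succ_preimage_pi]
    exact Set.compl_subset_compl.mpr Set.inter_subset_left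
  have hunion : μ (⋃ n, (B n)ᶜ) = 1 := by
    rw [← measure_univ (μ := μ)]
    refine measure_congr (eventuallyEq_univ.mpr (hhit.mono ?_))
    rintro ω ⟨k, hk⟩
    exact Set.mem_iUnion.mpr ⟨k, fun hω => (hω (Fin.last k) trivial).not_ge hk⟩
  calc c = ⨆ n, c * μ (B n)ᶜ := by
        rw [← ENNReal.mul_iSup, ← hmono.measure_iUnion, hunion, mul_one]
    _ ≤ w x := iSup_le fun n =>
        le_add_self.trans (h.setLIntegral_add_mul_measure_compl_le hw hsuper hD
          (fun _ hz => not_lt.mp hz) n)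

end MarkovChains

section Couplings

variable {E : Type*} [MeasurableSpace E] {P : Kernel E E} {H H' : Set (E × E)}

/-- Achievability of `H` by arbitrary couplings: the pair process is not required to be a Markov
chain. -/
def WeaklyAchievable (P : Kernel E E) (H : Set (E × E)) : Prop :=
  ∀ x y : E, ∃ (Ω : Type) (_ : MeasurableSpace Ω) (μ : Measure Ω) (X Y : ℕ → Ω → E),
    IsMChain P x μ X ∧ IsMChain P y μ Y ∧ ∀ᵐ ω ∂μ, ∃ n, (X n ω, Y n ω) ∈ H

theorem Achievable.weaklyAchievable (h : Achievable P H) : WeaklyAchievable P H := fun x y =>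
  let ⟨Ω, mΩ, μ, X, Y, ⟨hX, hY, _⟩, hhit⟩ := h x y
  ⟨Ω, mΩ, μ, X, Y, hX, hY, hhit⟩

theorem WeaklyAchievable.mono (h : WeaklyAchievable P H) (hH : H ⊆ H') :
    WeaklyAchievable P H' := fun x y =>
  let ⟨Ω, mΩ, μ, X, Y, hX, hY, hhit⟩ := h x y
  ⟨Ω, mΩ, μ, X, Y, hX, hY, hhit.mono fun _ ⟨n, hn⟩ => ⟨n, hH hn⟩⟩

theorem WeaklyAchievable.swap (h : WeaklyAchievable P H) :
    WeaklyAchievable P (Prod.swap ⁻¹' H) := fun x y =>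
  let ⟨Ω, mΩ, μ, X, Y, hX, hY, hhit⟩ := h y x
  ⟨Ω, mΩ, μ, Y, X, hY, hX, hhit⟩

end Couplings

section Variance

open scoped ENNReal

variable {Ω E : Type*} [MeasurableSpace Ω] [MeasurableSpace E]

theorem evariance_add_ofReal_sq_integral {μ : Measure Ω} [IsProbabilityMeasure μ] {X : Ω → ℝ}
    (hX : MemLp X 2 μ) :
    evariance X μ + ENNReal.ofReal (μ[X] ^ 2) = ∫⁻ ω, ENNReal.ofReal (X ω ^ 2) ∂μ := by
  rw [← hX.ofReal_variance_eq, ← ENNReal.ofReal_add (variance_nonneg X μ) (sq_nonneg _),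
    variance_eq_sub hX, sub_add_cancel,
    ← ofReal_integral_eq_lintegral_ofReal hX.integrable_sq (.of_forall fun ω => sq_nonneg _)]
  rfl

theorem ae_tendsto_sub_integral_of_tsum_evariance_ne_top {μ : Measure Ω} {X : ℕ → Ω → ℝ}
    (hX : ∀ n, AEMeasurable (X n) μ) (hsum : ∑' n, evariance (X n) μ ≠ ∞) :
    ∀ᵐ ω ∂μ, Tendsto (fun n => X n ω - μ[X n]) atTop (𝓝 0) := by
  have hmeas (n : ℕ) : AEMeasurable (fun ω => ‖X n ω - μ[X n]‖ₑ ^ 2) μ :=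
    ((hX n).sub_const _).enorm.pow_const 2
  have hfin : ∫⁻ ω, ∑' n, ‖X n ω - μ[X n]‖ₑ ^ 2 ∂μ ≠ ∞ := by
    rwa [lintegral_tsum hmeas]
  filter_upwards [ae_lt_top' (.tsum hmeas) hfin] with ω hω
  have hsq := ENNReal.tendsto_atTop_zero_of_tsum_ne_top hω.ne
  rw [tendsto_zero_iff_enorm_tendsto_zero]
  have hroot := hsq.ennrpow_const (((2 : ℕ) : ℝ)⁻¹)
  rw [ENNReal.zero_rpow_of_pos (by positivity)] at hroot
  simpa only [ENNReal.pow_rpow_inv_natCast two_ne_zero] using hroot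

theorem tsum_ne_top_of_add_eq {e v : ℕ → ℝ≥0∞} (k : ℕ) (hv : ∀ n, v n ≠ ∞)
    (h : ∀ n, e n + v (k + n) = v n) : ∑' n, e n ≠ ∞ := by
  have hvsum (s : Finset ℕ) : ∑ n ∈ s, v n ≠ ∞ := ENNReal.sum_ne_top.mpr fun n _ => hv n
  refine ne_top_of_le_ne_top (hvsum (Finset.range k)) (ENNReal.tsum_le_of_sum_range_le fun N => ?_)
  refine (ENNReal.add_le_add_iff_right (a := ∑ n ∈ Finset.range N, v (k + n))
    (ENNReal.sum_ne_top.mpr fun n _ => hv _)).mp ?_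
  calc ∑ n ∈ Finset.range N, e n + ∑ n ∈ Finset.range N, v (k + n)
      = ∑ n ∈ Finset.range N, v n := by simp_rw [← Finset.sum_add_distrib, h]
    _ ≤ ∑ n ∈ Finset.range (k + N), v n :=
      Finset.sum_le_sum_of_subset (Finset.range_mono (Nat.le_add_left N k))
    _ = ∑ n ∈ Finset.range k, v n + ∑ n ∈ Finset.range N, v (k + n) := Finset.sum_range_add _ _ _

variable {κ : Kernel E E} {π : Measure E} {g : E → ℝ}

theorem measurable_evariance_kernel [IsSFiniteKernel κ] (hg : Measurable g) :
    Measurable fun y => evariance g (κ y) := by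
  have hint : Measurable fun y => ∫ z, g z ∂(κ y) :=
    hg.stronglyMeasurable.integral_kernel.measurable
  exact Measurable.lintegral_kernel_prod_right'
    (((hg.comp measurable_snd).sub (hint.comp measurable_fst)).enorm.pow_const 2)

theorem lintegral_evariance_add_lintegral_sq_integral [IsMarkovKernel κ]
    (hπ : Kernel.Invariant κ π) (hg : Measurable g) (hg2 : ∀ y, MemLp g 2 (κ y)) :
    ∫⁻ y, evariance g (κ y) ∂π + ∫⁻ y, ENNReal.ofReal ((∫ z, g z ∂(κ y)) ^ 2) ∂π =
      ∫⁻ z, ENNReal.ofReal (g z ^ 2) ∂π := by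
  rw [← lintegral_add_left (measurable_evariance_kernel hg)]
  simp_rw [evariance_add_ofReal_sq_integral (hg2 _)]
  rw [← Measure.lintegral_bind κ.aemeasurable (by fun_prop), hπ]

theorem integral_measureReal_kernel {μ : Measure Ω} (η : Kernel Ω E)
    [IsFiniteKernel η] {A : Set E} (hA : MeasurableSet A) :
    ∫ ω, (η ω).real A ∂μ = (μ.bind η).real A := by
  simp_rw [measureReal_def]
  rw [integral_toReal (η.measurable_coe hA).aemeasurable (.of_forall fun _ => measure_lt_top _ _),
    Measure.bind_apply hA η.aemeasurable]

end Variance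

section StationaryChain

open scoped ENNReal

variable {E : Type*} [MeasurableSpace E] {P : Kernel E E} {π : Measure E} {A : Set E}

theorem measurable_kpow_measureReal (hA : MeasurableSet A) (n : ℕ) :
    Measurable fun y => (kpow P n y).real A :=
  ((kpow P n).measurable_coe hA).ennreal_toReal

theorem lintegral_liminf_kpow_le (hA : MeasurableSet A) (x : E) :
    ∫⁻ y, liminf (fun n => kpow P n y A) atTop ∂(P x) ≤ liminf (fun n => kpow P n x A) atTop := by
  have hstep (n : ℕ) : ∫⁻ y, kpow P n y A ∂(P x) = kpow P (n + 1) x A := by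
    rw [kpow_add_apply, kpow_one, Measure.bind_apply hA (kpow P n).aemeasurable]
  calc ∫⁻ y, liminf (fun n => kpow P n y A) atTop ∂(P x)
      ≤ liminf (fun n => ∫⁻ y, kpow P n y A ∂(P x)) atTop :=
        lintegral_liminf_le fun n => (kpow P n).measurable_coe hA
    _ = liminf (fun n => kpow P (n + 1) x A) atTop := by simp_rw [hstep]
    _ = liminf (fun n => kpow P n x A) atTop := liminf_nat_add (fun n => kpow P n x A) 1

theorem ae_forall_ae_kpow (hπ : Kernel.Invariant P π) {p : E → Prop} (hp : ∀ᵐ z ∂π, p z) :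
    ∀ᵐ y ∂π, ∀ k, ∀ᵐ z ∂(kpow P k y), p z :=
  ae_all_iff.mpr fun k => Measure.ae_ae_of_ae_comp (by rwa [invariant_kpow hπ k])

/-- Along the chain started at `y`, the probabilities `Pⁿ(·, A)` are asymptotically constant: at
every time `k` one has `Pⁿ(X_k, A) - Pⁿ⁺ᵏ(y, A) → 0` almost surely. -/
def AsympConstFrom (P : Kernel E E) (A : Set E) (y : E) : Prop :=
  ∀ k, ∀ᵐ z ∂(kpow P k y),
    Tendsto (fun n => (kpow P n z).real A - (kpow P (n + k) y).real A) atTop (𝓝 0)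

variable [IsMarkovKernel P]

theorem memLp_kpow_measureReal (hA : MeasurableSet A) (n : ℕ) (p : ℝ≥0∞) (μ : Measure E)
    [IsFiniteMeasure μ] : MemLp (fun y => (kpow P n y).real A) p μ :=
  .of_bound (measurable_kpow_measureReal hA n).aestronglyMeasurable 1 (.of_forall fun y => by
    rw [Real.norm_of_nonneg measureReal_nonneg]
    exact measureReal_le_one)

theorem integral_kpow_measureReal (hA : MeasurableSet A) (n k : ℕ) (y : E) :
    ∫ z, (kpow P n z).real A ∂(kpow P k y) = (kpow P (n + k) y).real A := by
  rw [integral_measureReal_kernel _ hA, ← kpow_add_apply]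

theorem tsum_lintegral_evariance_kpow_ne_top [IsFiniteMeasure π] (hπ : Kernel.Invariant P π)
    (hA : MeasurableSet A) (k : ℕ) :
    ∑' n, ∫⁻ y, evariance (fun z => (kpow P n z).real A) (kpow P k y) ∂π ≠ ∞ := by
  refine tsum_ne_top_of_add_eq (v := fun n => ∫⁻ y, ENNReal.ofReal ((kpow P n y).real A ^ 2) ∂π) k
    (fun n => ?_) fun n => ?_
  · exact (memLp_kpow_measureReal hA n 2 π).integrable_sq.lintegral_lt_top.ne
  · rw [← lintegral_evariance_add_lintegral_sq_integral (invariant_kpow hπ k)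
      (measurable_kpow_measureReal hA n) fun y => memLp_kpow_measureReal hA n 2 _, add_comm k n]
    simp_rw [integral_kpow_measureReal hA]

theorem ae_ae_tendsto_kpow_sub [IsFiniteMeasure π] (hπ : Kernel.Invariant P π)
    (hA : MeasurableSet A) (k : ℕ) :
    ∀ᵐ y ∂π, ∀ᵐ z ∂(kpow P k y),
      Tendsto (fun n => (kpow P n z).real A - (kpow P (n + k) y).real A) atTop (𝓝 0) := by
  have hmeas (n : ℕ) : Measurable fun y => evariance (fun z => (kpow P n z).real A) (kpow P k y) :=
    measurable_evariance_kernel (measurable_kpow_measureReal hA n)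
  have hfin := tsum_lintegral_evariance_kpow_ne_top hπ hA k
  rw [← lintegral_tsum fun n => (hmeas n).aemeasurable] at hfin
  filter_upwards [ae_lt_top (.tsum hmeas) hfin] with y hy
  simpa only [integral_kpow_measureReal hA] using
    ae_tendsto_sub_integral_of_tsum_evariance_ne_top
      (fun n => (measurable_kpow_measureReal hA n).aemeasurable) hy.ne

theorem ae_asympConstFrom [IsFiniteMeasure π] (hπ : Kernel.Invariant P π)
    (hA : MeasurableSet A) : ∀ᵐ y ∂π, AsympConstFrom P A y :=
  ae_all_iff.mpr fun k => ae_ae_tendsto_kpow_sub hπ hA k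

theorem AsympConstFrom.eventually_sub_lt {y z : E} (hy : AsympConstFrom P A y)
    (hz : AsympConstFrom P A z)
    (hach : WeaklyAchievable P {p | ∀ n, kpow P n p.1 A ≤ kpow P n p.2 A}) {ε : ℝ} (hε : 0 < ε) :
    ∀ᶠ n in atTop, (kpow P n y).real A - (kpow P n z).real A < ε := by
  obtain ⟨Ω, _, μ, Y, Z, hY, hZ, hhit⟩ := hach y z
  have : IsProbabilityMeasure μ := hY.1
  obtain ⟨ω, hYω, hZω, k, hk⟩ := ((hY.ae_forall hy).and ((hZ.ae_forall hz).and hhit)).exists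
  rw [← map_add_atTop_eq_nat k, eventually_map]
  filter_upwards [((hZω k).sub (hYω k)).eventually_lt_const (by rwa [sub_zero])] with n hn
  have hle : (kpow P n (Y k ω)).real A ≤ (kpow P n (Z k ω)).real A :=
    ENNReal.toReal_mono (measure_ne_top _ _) (hk n)
  linarith

theorem AsympConstFrom.tendsto_sub {y z : E} (hy : AsympConstFrom P A y)
    (hz : AsympConstFrom P A z)
    (hach : WeaklyAchievable P {p | ∀ n, kpow P n p.1 A ≤ kpow P n p.2 A}) :
    Tendsto (fun n => (kpow P n y).real A - (kpow P n z).real A) atTop (𝓝 0) := by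
  refine Metric.tendsto_nhds.mpr fun ε hε => ?_
  filter_upwards [hy.eventually_sub_lt hz hach hε, hz.eventually_sub_lt hy hach hε] with n hyz hzy
  rw [Real.dist_0_eq_abs, abs_lt]
  constructor <;> linarith

theorem ae_tendsto_kpow [IsProbabilityMeasure π] (hπ : Kernel.Invariant P π)
    (hA : MeasurableSet A)
    (hach : WeaklyAchievable P {p | ∀ n, kpow P n p.1 A ≤ kpow P n p.2 A}) :
    ∀ᵐ y ∂π, Tendsto (fun n => kpow P n y A) atTop (𝓝 (π A)) := by
  have hint (n : ℕ) : Integrable (fun z => (kpow P n z).real A) π :=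
    (memLp_kpow_measureReal hA n 1 π).integrable le_rfl
  filter_upwards [ae_asympConstFrom hπ hA] with y hy
  have hmean (n : ℕ) : ∫ z, ((kpow P n y).real A - (kpow P n z).real A) ∂π =
      (kpow P n y).real A - π.real A := by
    rw [integral_sub (integrable_const _) (hint n), integral_const, probReal_univ, one_smul,
      integral_measureReal_kernel _ hA, invariant_kpow hπ n]
  have hlim : Tendsto (fun n => (kpow P n y).real A - π.real A) atTop (𝓝 0) := by
    simp_rw [← hmean]
    rw [← integral_zero E ℝ (μ := π)]
    refine tendsto_integral_of_dominated_convergence (fun _ => 1)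
      (fun n => ((integrable_const _).sub (hint n)).aestronglyMeasurable) (integrable_const _)
      (fun n => .of_forall fun z => ?_)
      ((ae_asympConstFrom hπ hA).mono fun z hz => hy.tendsto_sub hz hach)
    exact abs_sub_le_of_nonneg_of_le measureReal_nonneg measureReal_le_one measureReal_nonneg
      measureReal_le_one
  exact (ENNReal.tendsto_toReal_iff (fun n => measure_ne_top _ _) (measure_ne_top _ _)).mp
    (tendsto_sub_nhds_zero_iff.mp hlim)

theorem le_liminf_kpow [IsProbabilityMeasure π] (hπ : Kernel.Invariant P π)
    (hA : MeasurableSet A)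
    (hach : WeaklyAchievable P {p | ∀ n, kpow P n p.1 A ≤ kpow P n p.2 A}) (x : E) :
    π A ≤ liminf (fun n => kpow P n x A) atTop := by
  obtain ⟨y, hy⟩ := (ae_forall_ae_kpow hπ (ae_tendsto_kpow hπ hA hach)).exists
  obtain ⟨Ω, _, μ, Y, X, hY, hX, hhit⟩ := hach y x
  refine hX.le_of_ae_exists_le (.liminf fun n => (kpow P n).measurable_coe hA)
    (lintegral_liminf_kpow_le hA) ?_
  filter_upwards [hY.ae_forall hy, hhit] with ω hYω ⟨k, hk⟩
  exact ⟨k, (hYω k).liminf_eq ▸ liminf_le_liminf (.of_forall hk)⟩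

variable [Preorder E]

theorem le_liminf_kpow_of_isUpperSet [IsProbabilityMeasure π] (hmono : MonotoneKernel P)
    (hach : WeaklyAchievable P {p : E × E | p.1 ≤ p.2}) (hπ : Kernel.Invariant P π)
    (hA : MeasurableSet A) (hA' : IsUpperSet A) (x : E) :
    π A ≤ liminf (fun n => kpow P n x A) atTop :=
  le_liminf_kpow hπ hA
    (hach.mono fun _ hp n => (hmono.kpow n).monotone_measure hA hA' hp) x

theorem le_liminf_kpow_of_isLowerSet [IsProbabilityMeasure π] (hmono : MonotoneKernel P)
    (hach : WeaklyAchievable P {p : E × E | p.1 ≤ p.2}) (hπ : Kernel.Invariant P π)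
    (hA : MeasurableSet A) (hA' : IsLowerSet A) (x : E) :
    π A ≤ liminf (fun n => kpow P n x A) atTop :=
  le_liminf_kpow hπ hA
    (hach.swap.mono fun _ hp n => (hmono.kpow n).antitone_measure hA hA' hp) x

end StationaryChain

theorem stmt10_general {E : Type*} [TopologicalSpace E] [PolishSpace E] [MeasurableSpace E]
    [BorelSpace E] [PartialOrder E] [OrderClosedTopology E]
    (P : Kernel E E) [IsMarkovKernel P] (hmono : MonotoneKernel P)
    (hach : WeaklyAchievable P {p : E × E | p.1 ≤ p.2})
    (π : Measure E) [IsProbabilityMeasure π] (hstat : π.bind (fun a => P a) = π)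
    (x : E)
    (htight : ∀ ε : ENNReal, 0 < ε → ∃ K : Set E, IsCompact K ∧ ∀ n, (kpow P n x) Kᶜ ≤ ε) :
    ∀ g : BoundedContinuousFunction E ℝ,
      Tendsto (fun n => ∫ z, g z ∂(kpow P n x)) atTop (nhds (∫ z, g z ∂π)) := by
  let μ : ℕ → ProbabilityMeasure E := fun n => ⟨kpow P n x, inferInstance⟩
  have hμ : IsTightMeasureSet (Set.range fun n => (μ n : Measure E)) := by
    refine isTightMeasureSet_iff_exists_isCompact_measure_compl_le.mpr fun ε hε => ?_
    obtain ⟨K, hK, hKε⟩ := htight ε hε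
    exact ⟨K, hK, Set.forall_mem_range.mpr hKε⟩
  have hlim : Tendsto μ atTop (𝓝 ⟨π, inferInstance⟩) :=
    tendsto_of_isTightMeasureSet_of_le_liminf hμ
      (fun F hF hF' => le_liminf_kpow_of_isUpperSet hmono hach hstat hF.measurableSet hF' x)
      (fun F hF hF' => le_liminf_kpow_of_isLowerSet hmono hach hstat hF.measurableSet hF' x)
  exact ProbabilityMeasure.tendsto_iff_forall_integral_tendsto.mp hlim

/-- Theorem 3.4 iv: if `M` is achievable for the monotone kernel `P`, a
stationary distribution `π` exists and for some `x` the laws of `Xₙˣ`, `n ≥ 0`, are tight,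
then these laws converge weakly to `π`. -/
theorem stmt10 {E : Type*} [MetricSpace E] [PolishSpace E] [MeasurableSpace E] [BorelSpace E]
    [PartialOrder E] [OrderClosedTopology E]
    (P : Kernel E E) [IsMarkovKernel P] (hmono : MonotoneKernel P)
    (hach : Achievable P {p : E × E | p.1 ≤ p.2})
    (π : Measure E) [IsProbabilityMeasure π] (hstat : π.bind (fun a => P a) = π)
    (x : E)
    (htight : ∀ ε : ENNReal, 0 < ε → ∃ K : Set E, IsCompact K ∧ ∀ n, (kpow P n x) Kᶜ ≤ ε) :
    ∀ g : BoundedContinuousFunction E ℝ,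
      Tendsto (fun n => ∫ z, g z ∂(kpow P n x)) atTop (nhds (∫ z, g z ∂π)) :=
  stmt10_general P hmono hach.weaklyAchievable π hstat x htight
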